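/- Let (W,S) be a finite Coxeter system with length function ℓ. Let i, j ∈ S with i ≠ j be such that the corresponding reflections do not commute, i.e. s_i s_j ≠ s_j s_i (the order of s_i s_j is at least 3). Let K ⊆ S with i ∈ K and j ∉ K. Then for every w ∈ W_K, every element u of the coset s_j·W_K with ℓ(w⁻¹u) minimal among elements of s_j·W_K satisfies u ∈ s_j·W_{K∖{i}}. (This is the key projection step in the proof of the main Theorem: since the reflections of types i and j do not commute, the projection of the residue W_K to the adjacent residue s_j·W_K is contained in the smaller residue s_j·W_{K∖{i}}; in building language, the projected simplex y₀ = proj_{x₁}(x₀) has x₁ as a face and the type-i vertex ℓ as a vertex.) -/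

import Mathlib

/-!
An element `t` is a left inversion of `x * y` iff exactly one of the following holds: `t` is a left
inversion of `x`, or `x⁻¹ * t * x` is one of `y`. In particular left inversions of elements of `W_K`
lie in `W_K`.

Let `u` be the projection of `w ∈ W_K` to `s_j W_K`, and let `s_k` be a left descent of
`x = s_j u ∈ W_K`. Since `w⁻¹ u = (w⁻¹ s_j) x` is shortest in its coset of `W_K`, the conjugate of
`s_k` by `w⁻¹ s_j` is a left inversion of `w⁻¹ s_j`, hence of `w⁻¹`, so `s_j s_k s_j ∈ W_K`. As
`s_j ∉ W_K` is not a left inversion of `s_j (s_k s_j)`, it is one of `s_k s_j`; hence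
`s_k s_j s_k = s_j`, so `s_k` and `s_j` commute. Then `s_k u` is the projection of `s_k w` to the
same coset, and induction on the length of `x` shows that `x` is a product of generators commuting
with `s_j`.

That `s_j ∉ W_K` when `j ∉ K` is read off the geometric representation: `W_K` preserves the `j`-th
coordinate, and `s_j` does not.
-/

section GeometricReflections

open Polynomial.Chebyshev Module

lemma eval_S_add_eval_S_eq_zero {m : ℕ} (hm : 3 ≤ m) {a b : ℤ} (hab : a + b + 2 = m) :
    (S ℝ a).eval (2 * Real.cos (2 * Real.pi / m)) +
      (S ℝ b).eval (2 * Real.cos (2 * Real.pi / m)) = 0 := by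
  have hm' : (3 : ℝ) ≤ m := by exact_mod_cast hm
  set θ := 2 * Real.pi / (m : ℝ) with hθ
  have hsin : Real.sin θ ≠ 0 := by
    refine (Real.sin_pos_of_pos_of_lt_pi (by positivity) ?_).ne'
    rw [hθ, div_lt_iff₀ (by positivity)]
    nlinarith [Real.pi_pos]
  have hangle : (b + 1 : ℝ) * θ = 2 * Real.pi - (a + 1) * θ := by
    have hab' : (a + b + 2 : ℝ) = m := by exact_mod_cast hab
    rw [hθ]
    field_simp
    linarith
  refine (mul_eq_zero.mp ?_).resolve_right hsin
  rw [add_mul, S_two_mul_real_cos, S_two_mul_real_cos, hangle, Real.sin_two_pi_sub, add_neg_cancel]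

lemma reflection_mul_reflection_sq_eq_one {R V : Type*} [CommRing R] [AddCommGroup V] [Module R V]
    {x y : V} {f g : Dual R V} (hf : f x = 2) (hg : g y = 2) (hfy : f y = 0) (hgx : g x = 0) :
    (reflection hf * reflection hg) ^ 2 = 1 := by
  ext z
  simp only [pow_two, LinearEquiv.mul_apply, reflection_apply, map_sub, map_smul, hf, hg, hfy,
    hgx, LinearEquiv.coe_one, id_eq]
  module

variable {V : Type*} [AddCommGroup V] [Module ℝ V] {x y : V} {f g : Dual ℝ V}

lemma reflection_mul_reflection_pow_eq_one (hf : f x = 2) (hg : g y = 2) {m : ℕ} (hm : 3 ≤ m)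
    (hfg : f y * g x = 4 * Real.cos (Real.pi / m) ^ 2) :
    (reflection hf * reflection hg) ^ m = 1 := by
  have htrace : 2 * Real.cos (2 * Real.pi / m) = f y * g x - 2 := by
    rw [hfg, mul_div_assoc, Real.cos_two_mul]
    ring
  ext z
  rw [reflection_mul_reflection_pow_apply hf hg m z _ htrace]
  obtain ⟨k, rfl | rfl⟩ := m.even_or_odd'
  · have hS := eval_S_add_eval_S_eq_zero hm (a := k - 1) (b := k - 1) (by push_cast; ring)
    rw [show (((2 * k : ℕ) : ℤ) - 2) / 2 = k - 1 by omega,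
      show (((2 * k : ℕ) : ℤ) - 1) / 2 = k - 1 by omega, add_self_eq_zero.mp hS]
    simp
  · have hS := eval_S_add_eval_S_eq_zero hm (a := k) (b := k - 1) (by push_cast; ring)
    rw [show ((2 * k + 1 : ℕ) : ℤ) / 2 = k by omega,
      show (((2 * k + 1 : ℕ) : ℤ) - 2) / 2 = k - 1 by omega,
      show (((2 * k + 1 : ℕ) : ℤ) - 1) / 2 = k by omega,
      show (((2 * k + 1 : ℕ) : ℤ) - 3) / 2 = k - 1 by omega, hS]
    simp

variable {B : Type*} (M : CoxeterMatrix B)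

/-- The coroot of the `i`-th simple root in the geometric representation, which has the simple roots
`Finsupp.single k 1` as a basis. The junk value `π / 0 = 0` gives the pairing `-2` when `M i k = 0`,
the usual choice for infinite order. -/
noncomputable def geometricCoroot (i : B) : Dual ℝ (B →₀ ℝ) :=
  Finsupp.linearCombination ℝ fun k ↦ -2 * Real.cos (Real.pi / M i k)

lemma geometricCoroot_single (i k : B) :
    geometricCoroot M i (Finsupp.single k 1) = -2 * Real.cos (Real.pi / M i k) := by
  simp [geometricCoroot]

lemma geometricCoroot_single_self (i : B) : geometricCoroot M i (Finsupp.single i 1) = 2 := by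
  simp [geometricCoroot_single]

/-- The `i`-th simple reflection of the geometric representation. -/
noncomputable def geometricReflection (i : B) : (B →₀ ℝ) ≃ₗ[ℝ] (B →₀ ℝ) :=
  reflection (geometricCoroot_single_self M i)

lemma geometricReflection_apply_of_ne {i j : B} (hij : i ≠ j) (v : B →₀ ℝ) :
    geometricReflection M i v j = v j := by
  simp [geometricReflection, reflection_apply, hij]

lemma isLiftable_geometricReflection : M.IsLiftable (geometricReflection M) := by
  intro i j
  have hij := geometricCoroot_single M i j
  have hji := geometricCoroot_single M j i
  rw [M.symmetric j i] at hji
  obtain hm | hm | hm | hm : M i j = 0 ∨ M i j = 1 ∨ M i j = 2 ∨ 3 ≤ M i j := by omega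
  · rw [hm, pow_zero]
  · obtain rfl : i = j := not_imp_comm.mp (M.off_diagonal i j) (not_not_intro hm)
    rw [hm, pow_one]
    ext1 v
    exact involutive_reflection (geometricCoroot_single_self M i) v
  · have hcos : -2 * Real.cos (Real.pi / M i j) = 0 := by simp [hm]
    rw [hm]
    exact reflection_mul_reflection_sq_eq_one _ _ (hij.trans hcos) (hji.trans hcos)
  · refine reflection_mul_reflection_pow_eq_one _ _ hm ?_
    rw [hij, hji]
    ring

end GeometricReflections

section CoxeterSystems

open CoxeterSystem Module

variable {B W : Type*} [Group W] {M : CoxeterMatrix B} (cs : CoxeterSystem M W)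

/-- The geometric representation of a Coxeter group on the real vector space spanned by the simple
roots; it is used to separate a simple reflection from the parabolic subgroups not containing it. -/
noncomputable def geometricRepresentation : W →* (B →₀ ℝ) ≃ₗ[ℝ] (B →₀ ℝ) :=
  cs.lift ⟨geometricReflection M, isLiftable_geometricReflection M⟩

lemma geometricRepresentation_simple (i : B) :
    geometricRepresentation cs (cs.simple i) = geometricReflection M i :=
  cs.lift_apply_simple _ i

/-- The standard parabolic subgroup `W_K`. -/
def standardParabolic (K : Set B) : Subgroup W :=
  Subgroup.closure (cs.simple '' K)

variable {cs}

lemma simple_mem_standardParabolic {K : Set B} {k : B} (hk : k ∈ K) :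
    cs.simple k ∈ standardParabolic cs K :=
  Subgroup.subset_closure (Set.mem_image_of_mem _ hk)

@[elab_as_elim]
lemma standardParabolic_induction {K : Set B} {p : (w : W) → w ∈ standardParabolic cs K → Prop}
    (one : p 1 (one_mem _))
    (simple_mul : ∀ k (hk : k ∈ K) w (hw : w ∈ standardParabolic cs K), p w hw →
      p (cs.simple k * w) (mul_mem (simple_mem_standardParabolic hk) hw))
    {w : W} (hw : w ∈ standardParabolic cs K) : p w hw := by
  induction hw using Subgroup.closure_induction_left with
  | one => exact one
  | mul_left _ hx w hw ih =>
    obtain ⟨k, hk, rfl⟩ := hx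
    exact simple_mul k hk w hw ih
  | inv_mul_cancel _ hx w hw ih =>
    obtain ⟨k, hk, rfl⟩ := hx
    simpa only [cs.inv_simple] using simple_mul k hk w hw ih

lemma geometricRepresentation_apply_of_mem_standardParabolic {K : Set B} {j : B} (hj : j ∉ K)
    {w : W} (hw : w ∈ standardParabolic cs K) (v : B →₀ ℝ) :
    geometricRepresentation cs w v j = v j := by
  induction hw using standardParabolic_induction with
  | one => simp
  | simple_mul k hk w _ ih =>
    rw [map_mul, LinearEquiv.mul_apply, geometricRepresentation_simple,
      geometricReflection_apply_of_ne M (ne_of_mem_of_not_mem hk hj), ih]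

lemma simple_mem_standardParabolic_iff {K : Set B} {j : B} :
    cs.simple j ∈ standardParabolic cs K ↔ j ∈ K := by
  refine ⟨fun hmem ↦ ?_, simple_mem_standardParabolic⟩
  by_contra hj
  have hfix := geometricRepresentation_apply_of_mem_standardParabolic hj hmem (Finsupp.single j 1)
  rw [geometricRepresentation_simple, geometricReflection, reflection_apply_self] at hfix
  norm_num at hfix

section Inversions

lemma prod_map_alternatingWord {G : Type*} [Monoid G] (f : B → G) (i j : B) (p : ℕ) :
    ((alternatingWord i j (2 * p)).map f).prod = (f i * f j) ^ p := by
  induction p with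
  | zero => simp [alternatingWord]
  | succ p ih => simp [mul_add, alternatingWord_succ, ih, pow_succ]

lemma leftInvSeq_alternatingWord (i j : B) (p : ℕ) :
    cs.leftInvSeq (alternatingWord i j (2 * p)) =
      (List.range (2 * p)).map fun k ↦ cs.simple i * (cs.simple j * cs.simple i) ^ k := by
  refine List.ext_getElem (by simp) fun k hk _ ↦ ?_
  rw [cs.getElem_leftInvSeq_alternatingWord i j p k (by simpa using hk),
    prod_alternatingWord_eq_mul_pow, if_neg (by simp)]
  simp [show (2 * k + 1) / 2 = k by omega]

variable [DecidableEq W]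

lemma even_count_leftInvSeq_alternatingWord (i j : B) (t : W) :
    Even ((cs.leftInvSeq (alternatingWord i j (2 * M i j))).count t) := by
  have hperiodic (k : ℕ) : cs.simple i * (cs.simple j * cs.simple i) ^ (M i j + k) =
      cs.simple i * (cs.simple j * cs.simple i) ^ k := by
    rw [pow_add, cs.simple_mul_simple_pow', one_mul]
  rw [leftInvSeq_alternatingWord, two_mul, List.range_add, List.map_append, List.map_map,
    List.count_append]
  simp only [Function.comp_def, hperiodic]
  exact Even.add_self _

variable (cs)

/-- The generator of the action of `W` on functions `W → ZMod 2` that adds the indicator function of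
left inversions: the product of these maps along a word for `w` sends `0` to the parity of the
multiplicities in the left inversion sequence of that word. -/
noncomputable def inversionAct (i : B) : Function.End (W → ZMod 2) := fun f t ↦
  (if t = cs.simple i then 1 else 0) + f ((cs.simple i)⁻¹ * t * cs.simple i)

lemma prod_map_inversionAct_apply (ω : List B) (f : W → ZMod 2) (t : W) :
    (ω.map (inversionAct cs)).prod f t =
      (cs.leftInvSeq ω).count t + f ((cs.wordProd ω)⁻¹ * t * cs.wordProd ω) := by
  induction ω generalizing t with
  | nil =>
    rw [wordProd_nil, inv_one, one_mul, mul_one, leftInvSeq_nil, List.count_nil, Nat.cast_zero,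
      zero_add]
    rfl
  | cons i ω ih =>
    have hcount : ((cs.leftInvSeq ω).map (MulAut.conj (cs.simple i))).count t =
        (cs.leftInvSeq ω).count ((cs.simple i)⁻¹ * t * cs.simple i) := by
      rw [← List.count_map_of_injective (cs.leftInvSeq ω) _ (MulAut.conj (cs.simple i)).injective]
      simp [mul_assoc]
    calc ((i :: ω).map (inversionAct cs)).prod f t
        = (if t = cs.simple i then 1 else 0) +
            (ω.map (inversionAct cs)).prod f ((cs.simple i)⁻¹ * t * cs.simple i) := by
          rw [List.map_cons, List.prod_cons]; rfl
      _ = (cs.leftInvSeq (i :: ω)).count t +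
            f ((cs.wordProd (i :: ω))⁻¹ * t * cs.wordProd (i :: ω)) := by
          rw [ih, leftInvSeq, List.count_cons, hcount, wordProd_cons]
          simp only [beq_iff_eq, eq_comm (a := cs.simple i), Nat.cast_add, Nat.cast_ite,
            Nat.cast_one, Nat.cast_zero, mul_inv_rev, mul_assoc]
          ring

lemma isLiftable_inversionAct : M.IsLiftable (inversionAct cs) := by
  intro i j
  rw [← prod_map_alternatingWord]
  funext f t
  rw [prod_map_inversionAct_apply,
    (ZMod.natCast_eq_zero_iff_even).mpr (even_count_leftInvSeq_alternatingWord i j t),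
    prod_alternatingWord_eq_mul_pow, if_pos (even_two_mul _), Nat.mul_div_cancel_left _ two_pos,
    cs.simple_mul_simple_pow, one_mul, inv_one, one_mul, mul_one, zero_add]
  rfl

/-- The action of `W` on functions `W → ZMod 2` generated by the maps `inversionAct cs i`. -/
noncomputable def inversionHom : W →* Function.End (W → ZMod 2) :=
  cs.lift ⟨inversionAct cs, isLiftable_inversionAct cs⟩

/-- The parity of the multiplicity of `t` in the left inversion sequence of a word for `w`; being
defined through `inversionHom`, it does not depend on the word. -/
noncomputable def inversionParity (w t : W) : ZMod 2 :=
  inversionHom cs w 0 t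

lemma inversionHom_wordProd_apply (ω : List B) (f : W → ZMod 2) (t : W) :
    inversionHom cs (cs.wordProd ω) f t =
      (cs.leftInvSeq ω).count t + f ((cs.wordProd ω)⁻¹ * t * cs.wordProd ω) := by
  rw [← prod_map_inversionAct_apply, wordProd, map_list_prod, List.map_map]
  congr! 3
  ext1 i
  exact cs.lift_apply_simple _ i

variable {cs}

lemma inversionParity_wordProd (ω : List B) (t : W) :
    inversionParity cs (cs.wordProd ω) t = (cs.leftInvSeq ω).count t := by
  simp [inversionParity, inversionHom_wordProd_apply]

lemma inversionParity_mul (x y t : W) :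
    inversionParity cs (x * y) t =
      inversionParity cs x t + inversionParity cs y (x⁻¹ * t * x) := by
  obtain ⟨ω, rfl⟩ := cs.wordProd_surjective x
  rw [inversionParity_wordProd, inversionParity, map_mul]
  exact inversionHom_wordProd_apply cs ω _ t

lemma inversionParity_one (t : W) : inversionParity cs 1 t = 0 := by
  simpa using inversionParity_wordProd (cs := cs) [] t

lemma inversionParity_simple_self (i : B) :
    inversionParity cs (cs.simple i) (cs.simple i) = 1 := by
  simpa using inversionParity_wordProd (cs := cs) [i] (cs.simple i)

lemma inversionParity_self_of_isReflection {t : W} (ht : cs.IsReflection t) :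
    inversionParity cs t t = 1 := by
  obtain ⟨w, i, rfl⟩ := ht
  have hinv := inversionParity_mul (cs := cs) w w⁻¹ (w * cs.simple i * w⁻¹)
  rw [mul_inv_cancel, inversionParity_one] at hinv
  rw [inversionParity_mul, inversionParity_mul]
  simp only [mul_assoc, mul_inv_rev, inv_mul_cancel_left, inv_mul_cancel, mul_one, inv_simple,
    simple_mul_simple_cancel_left, inversionParity_simple_self] at hinv ⊢
  linear_combination -hinv

lemma isLeftInversion_of_inversionParity_ne_zero {w t : W} (h : inversionParity cs w t ≠ 0) :
    cs.IsLeftInversion w t := by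
  obtain ⟨ω, hω, rfl⟩ := cs.exists_isReduced w
  refine cs.isLeftInversion_of_mem_leftInvSeq hω (List.count_pos_iff.mp ?_)
  rw [inversionParity_wordProd] at h
  exact Nat.pos_of_ne_zero fun hcount ↦ h (by rw [hcount, Nat.cast_zero])

lemma inversionParity_eq_one_iff {w t : W} :
    inversionParity cs w t = 1 ↔ cs.IsLeftInversion w t := by
  refine ⟨fun h ↦ isLeftInversion_of_inversionParity_ne_zero (h ▸ one_ne_zero), fun h ↦ ?_⟩
  by_contra hw
  have htw : ¬ cs.IsLeftInversion (t * w) t := (h.1.not_isLeftInversion_mul_right_iff).mpr h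
  have hmul := inversionParity_mul (cs := cs) t w t
  rw [not_imp_comm.mp isLeftInversion_of_inversionParity_ne_zero htw,
    inversionParity_self_of_isReflection h.1, inv_mul_cancel, one_mul] at hmul
  exact hw (eq_comm.mp (CharTwo.add_eq_zero.mp hmul.symm))

end Inversions

lemma isLeftInversion_mul_iff {x y t : W} :
    cs.IsLeftInversion (x * y) t ↔
      Xor (cs.IsLeftInversion x t) (cs.IsLeftInversion y (x⁻¹ * t * x)) := by
  classical
  simp only [← inversionParity_eq_one_iff, inversionParity_mul]
  generalize inversionParity cs x t = a, inversionParity cs y (x⁻¹ * t * x) = b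
  revert a b
  decide

lemma isLeftInversion_simple_iff {i : B} {t : W} :
    cs.IsLeftInversion (cs.simple i) t ↔ t = cs.simple i := by
  constructor
  · rintro ⟨-, hlt⟩
    rw [cs.length_simple, Nat.lt_one_iff, cs.length_eq_zero_iff] at hlt
    rw [eq_inv_of_mul_eq_one_left hlt, cs.inv_simple]
  · rintro rfl
    exact ⟨cs.isReflection_simple i, by simp⟩

lemma mem_standardParabolic_of_isLeftInversion {K : Set B} {w t : W}
    (hw : w ∈ standardParabolic cs K) (ht : cs.IsLeftInversion w t) :
    t ∈ standardParabolic cs K := by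
  induction hw using standardParabolic_induction generalizing t with
  | one => exact absurd ht.2 (by simp)
  | simple_mul k hk w _ ih =>
    have hkW : cs.simple k ∈ standardParabolic cs K := simple_mem_standardParabolic hk
    rcases isLeftInversion_mul_iff.mp ht with ⟨hkinv, -⟩ | ⟨hwinv, -⟩
    · rwa [isLeftInversion_simple_iff.mp hkinv]
    · have hconj := ih hwinv
      rwa [Subgroup.mul_mem_cancel_right _ hkW, Subgroup.mul_mem_cancel_left _ (inv_mem hkW)]
        at hconj

lemma commute_of_conj_mem_standardParabolic {K : Set B} {j k : B} (hj : j ∉ K) (hk : k ∈ K)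
    (hconj : cs.simple j * cs.simple k * cs.simple j ∈ standardParabolic cs K) :
    Commute (cs.simple k) (cs.simple j) := by
  have hjW : cs.simple j ∉ standardParabolic cs K := simple_mem_standardParabolic_iff.not.mpr hj
  have hkj : cs.simple j ≠ cs.simple k := fun h ↦ hjW (h ▸ simple_mem_standardParabolic hk)
  have hnot : ¬ cs.IsLeftInversion (cs.simple j * (cs.simple k * cs.simple j)) (cs.simple j) :=
    fun h ↦ hjW (mem_standardParabolic_of_isLeftInversion (by rwa [← mul_assoc]) h)
  have hinv : cs.IsLeftInversion (cs.simple k * cs.simple j) (cs.simple j) := by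
    rw [isLeftInversion_mul_iff, xor_iff_not_iff, not_not, inv_mul_cancel, one_mul] at hnot
    exact hnot.mp (isLeftInversion_simple_iff.mpr rfl)
  rcases isLeftInversion_mul_iff.mp hinv with ⟨hkinv, -⟩ | ⟨hjinv, -⟩
  · exact absurd (isLeftInversion_simple_iff.mp hkinv) hkj
  · have hfix := isLeftInversion_simple_iff.mp hjinv
    rw [mul_assoc, inv_mul_eq_iff_eq_mul] at hfix
    exact hfix.symm

/-- The chamber `u` is a projection of the chamber `w` to the residue `g W_K`: it is closest to `w`
in that residue for the gallery distance `ℓ (w⁻¹ * u)`. The residue is encoded by its representative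
`g`. -/
structure IsResidueProjection (cs : CoxeterSystem M W) (K : Set B) (g w u : W) : Prop where
  mem : g⁻¹ * u ∈ standardParabolic cs K
  length_le : ∀ v, g⁻¹ * v ∈ standardParabolic cs K → cs.length (w⁻¹ * u) ≤ cs.length (w⁻¹ * v)

namespace IsResidueProjection

variable {K : Set B} {g w u : W}

lemma mul_left (h : IsResidueProjection cs K g w u) (a : W) :
    IsResidueProjection cs K (a * g) (a * w) (a * u) where
  mem := by simpa [mul_assoc] using h.mem
  length_le v hv := by simpa [mul_assoc] using h.length_le (a⁻¹ * v) (by simpa [mul_assoc] using hv)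

lemma of_mul_right {a : W} (h : IsResidueProjection cs K (g * a) w u)
    (ha : a ∈ standardParabolic cs K) : IsResidueProjection cs K g w u := by
  have hcoset (v : W) :
      (g * a)⁻¹ * v ∈ standardParabolic cs K ↔ g⁻¹ * v ∈ standardParabolic cs K := by
    rw [mul_inv_rev, mul_assoc, Subgroup.mul_mem_cancel_left _ (inv_mem ha)]
  exact ⟨(hcoset u).mp h.mem, fun v hv ↦ h.length_le v ((hcoset v).mpr hv)⟩

lemma isLeftInversion_conj (h : IsResidueProjection cs K g w u) {t : W}
    (ht : cs.IsLeftInversion (g⁻¹ * u) t) :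
    cs.IsLeftInversion (w⁻¹ * g) (w⁻¹ * g * t * (w⁻¹ * g)⁻¹) := by
  have htK := mem_standardParabolic_of_isLeftInversion h.mem ht
  have hle : cs.length (w⁻¹ * u) ≤ cs.length (w⁻¹ * g * t * (w⁻¹ * g)⁻¹ * (w⁻¹ * u)) := by
    convert h.length_le (g * t * g⁻¹ * u) (by simpa [mul_assoc] using mul_mem htK h.mem) using 2
    group
  have hxor := isLeftInversion_mul_iff.not.mp
    (show ¬ cs.IsLeftInversion (w⁻¹ * g * (g⁻¹ * u)) (w⁻¹ * g * t * (w⁻¹ * g)⁻¹) from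
      fun hinv ↦ hle.not_gt (by simpa [mul_assoc] using hinv.2))
  rw [xor_iff_not_iff, not_not] at hxor
  exact hxor.mpr (by simpa [mul_assoc] using ht)

lemma commute_of_isLeftDescent {j k : B} (hj : j ∉ K) (hw : w ∈ standardParabolic cs K)
    (h : IsResidueProjection cs K (cs.simple j) w u)
    (hk : cs.IsLeftDescent ((cs.simple j)⁻¹ * u) k) :
    k ∈ K ∧ Commute (cs.simple k) (cs.simple j) := by
  have hkinv := (cs.isLeftInversion_simple_iff_isLeftDescent _ _).mpr hk
  have hkK : k ∈ K :=
    simple_mem_standardParabolic_iff.mp (mem_standardParabolic_of_isLeftInversion h.mem hkinv)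
  refine ⟨hkK, commute_of_conj_mem_standardParabolic hj hkK ?_⟩
  rcases isLeftInversion_mul_iff.mp (h.isLeftInversion_conj hkinv) with ⟨hwinv, -⟩ | ⟨hjinv, -⟩
  · have hmem := mem_standardParabolic_of_isLeftInversion (inv_mem hw) hwinv
    simpa [mul_assoc] using mul_mem (mul_mem hw hmem) (inv_mem hw)
  · have hjk : cs.simple k = cs.simple j := by
      simpa only [mul_inv_rev, inv_inv, mul_assoc, mul_inv_cancel, mul_inv_cancel_left, mul_one,
        mul_eq_left, mul_inv_eq_one] using isLeftInversion_simple_iff.mp hjinv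
    exact absurd (simple_mem_standardParabolic_iff.mp (hjk ▸ simple_mem_standardParabolic hkK)) hj

end IsResidueProjection

theorem projection_into_smaller_residue_general {K : Set B} {j : B} (hj : j ∉ K) {w u : W}
    (hw : w ∈ standardParabolic cs K) (hu : IsResidueProjection cs K (cs.simple j) w u) :
    (cs.simple j)⁻¹ * u ∈
      standardParabolic cs {k ∈ K | Commute (cs.simple k) (cs.simple j)} := by
  induction hn : cs.length ((cs.simple j)⁻¹ * u) using Nat.strong_induction_on
    generalizing w u with
  | _ n ih =>
  by_cases hone : (cs.simple j)⁻¹ * u = 1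
  · exact hone ▸ one_mem _
  obtain ⟨k, hk⟩ := cs.exists_leftDescent_of_ne_one hone
  obtain ⟨hkK, hkj⟩ := hu.commute_of_isLeftDescent hj hw hk
  have hkW : cs.simple k ∈ standardParabolic cs K := simple_mem_standardParabolic hkK
  have hku : (cs.simple j)⁻¹ * (cs.simple k * u) = cs.simple k * ((cs.simple j)⁻¹ * u) := by
    rw [← mul_assoc, ← hkj.inv_right.eq, mul_assoc]
  have hproj : IsResidueProjection cs K (cs.simple j) (cs.simple k * w) (cs.simple k * u) :=
    (hkj.eq ▸ hu.mul_left (cs.simple k)).of_mul_right hkW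
  have hmem := ih _ (by rw [hku, ← hn]; exact hk) (mul_mem hkW hw) hproj rfl
  have hkW' : cs.simple k ∈
      standardParabolic cs {k ∈ K | Commute (cs.simple k) (cs.simple j)} :=
    simple_mem_standardParabolic ⟨hkK, hkj⟩
  rwa [hku, Subgroup.mul_mem_cancel_left _ hkW'] at hmem

end CoxeterSystems

/-- Key projection step in the proof of the main Theorem: if the simple reflections
`s i` and `s j` do not commute, `i ∈ K` and `j ∉ K`, then the projection of any chamber
of the residue `W_K` to the adjacent residue `s j • W_K` lies in the smaller residue
`s j • W_{K \ {i}}`. -/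
theorem projection_into_smaller_residue
    {B : Type*} {W : Type*} [Group W] [Finite W] {M : CoxeterMatrix B}
    (cs : CoxeterSystem M W)
    (i j : B) (hij : i ≠ j)
    (hnc : cs.simple i * cs.simple j ≠ cs.simple j * cs.simple i)
    (K : Set B) (hiK : i ∈ K) (hjK : j ∉ K)
    (WK WK' : Subgroup W)
    (hWK : WK = Subgroup.closure (cs.simple '' K))
    (hWK' : WK' = Subgroup.closure (cs.simple '' (K \ {i})))
    (w : W) (hw : w ∈ WK)
    (u : W) (hu : (cs.simple j)⁻¹ * u ∈ WK)
    (humin : ∀ v : W, (cs.simple j)⁻¹ * v ∈ WK →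
      cs.length (w⁻¹ * u) ≤ cs.length (w⁻¹ * v)) :
    (cs.simple j)⁻¹ * u ∈ WK' := by
  subst hWK hWK'
  refine Subgroup.closure_mono (Set.image_mono fun k hk ↦ ?_)
    (projection_into_smaller_residue_general hjK hw ⟨hu, humin⟩)
  exact ⟨hk.1, fun hki ↦ hnc (hki ▸ hk.2)⟩
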